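/- Let R be an s-unital exchange ring. Then R is purely infinite if and only if R is properly purely infinite. -/

import Mathlib

/-- `x ≼ y` for square matrices over a (possibly nonunital) ring: `x = α * y * β`
for some rectangular matrices `α`, `β`. -/
def MatSub {R : Type*} [NonUnitalRing R] {k n : ℕ}
    (x : Matrix (Fin k) (Fin k) R) (y : Matrix (Fin n) (Fin n) R) : Prop :=
  ∃ (α : Matrix (Fin k) (Fin n) R) (β : Matrix (Fin n) (Fin k) R), x = α * y * β

/-- `a ⊕ b ≼ c` for ring elements: the block-diagonal matrix `diag(a, b)` satisfies
`diag(a,b) ≼ (c)` as square matrices. -/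
def PairSub {R : Type*} [NonUnitalRing R] (a b c : R) : Prop :=
  MatSub !![a, 0; 0, b] !![c]

/-- `a ≼ b` for ring elements: `a = α * b * β` for some ring elements. -/
def ElemSub {R : Type*} [NonUnitalRing R] (a b : R) : Prop :=
  ∃ α β : R, a = α * b * β

/-- `K(a) = { x | a ⊕ x ≼ a }`. -/
def KSet {R : Type*} [NonUnitalRing R] (a : R) : Set R := { x | PairSub a x a }

/-- An element `a` is infinite if `a ⊕ x ≼ a` for some nonzero `x`, i.e. `K(a) ≠ 0`. -/
def IsInfiniteElem {R : Type*} [NonUnitalRing R] (a : R) : Prop :=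
  ∃ x : R, x ≠ 0 ∧ PairSub a x a

/-- An element `a` is properly infinite if `a ≠ 0` and `a ⊕ a ≼ a`. -/
def IsProperlyInfiniteElem {R : Type*} [NonUnitalRing R] (a : R) : Prop :=
  a ≠ 0 ∧ PairSub a a a

/-- A ring is s-unital if each element `x` admits `u, v` with `u * x = x` and `x * v = x`. -/
def IsSUnitalRing (R : Type*) [NonUnitalRing R] : Prop :=
  ∀ x : R, (∃ u : R, u * x = x) ∧ (∃ v : R, x * v = x)

/-- `b` belongs to `RaR`, the set of finite sums `Σ xᵢ * a * yᵢ`. -/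
def MemRaR {R : Type*} [NonUnitalRing R] (a b : R) : Prop :=
  ∃ (n : ℕ) (x y : Fin n → R), b = ∑ i, x i * a * y i

/-- A (possibly nonunital) ring is a division ring: it has a nonzero multiplicative identity
with respect to which every nonzero element is two-sided invertible. -/
def IsDivisionRingPred (R : Type*) [NonUnitalRing R] : Prop :=
  ∃ u : R, u ≠ 0 ∧ (∀ x : R, u * x = x ∧ x * u = x) ∧
    ∀ x : R, x ≠ 0 → ∃ y : R, x * y = u ∧ y * x = u

/-- A ring `R` is purely infinite if no quotient of `R` by a two-sided ideal is a division
ring, and `b ∈ RaR` implies `b = x * a * y` for some `x, y ∈ R`. -/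
def IsPurelyInfiniteRing (R : Type*) [NonUnitalRing R] : Prop :=
  (∀ I : TwoSidedIdeal R, ¬ IsDivisionRingPred I.ringCon.Quotient) ∧
  ∀ a b : R, MemRaR a b → ElemSub b a

/-- A ring is properly purely infinite if every nonzero element is properly infinite. -/
def IsProperlyPurelyInfiniteRing (R : Type*) [NonUnitalRing R] : Prop :=
  ∀ a : R, a ≠ 0 → IsProperlyInfiniteElem a

/-- An idempotent `e` is infinite if `e ∼ f ≤ e` for some idempotent `f ≠ e`. -/
def IsInfiniteIdem {R : Type*} [NonUnitalRing R] (e : R) : Prop :=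
  IsIdempotentElem e ∧ ∃ f : R, IsIdempotentElem f ∧ (∃ x y : R, e = x * y ∧ f = y * x) ∧
    e * f = f ∧ f * e = f ∧ f ≠ e

/-- An exchange ring: for each `x` there are an idempotent `e` and elements `r, s` with
`e = x * r = x + s - x * s`. -/
def IsExchangeRing (R : Type*) [NonUnitalRing R] : Prop :=
  ∀ x : R, ∃ e r s : R, IsIdempotentElem e ∧ e = x * r ∧ e = x + s - x * s

/-- A ring has local units if every finite subset is contained in a corner `eRe`
for some idempotent `e`. -/
def HasLocalUnits (R : Type*) [NonUnitalRing R] : Prop :=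
  ∀ s : Finset R, ∃ e : R, IsIdempotentElem e ∧ ∀ x ∈ s, ∃ r : R, x = e * r * e

/-!
Proper infiniteness `a ⊕ a ≼ a` makes `{b | b ≼ a}` closed under addition and fails in a division
ring; this gives one implication.

Conversely, let `R` be purely infinite. Since `a = u a v` and every element `x` satisfies `x e = x`
for some idempotent `e`, it is enough to show `e ⊕ e ≼ e`, that is `e ∈ K(e)`, for idempotents.
Now `K(e)` is a two-sided ideal. If `e ∉ K(e)`, choose an ideal `M ⊇ K(e)` maximal among those
avoiding `e`. The exchange property provides an idempotent outside `M` in `xR` for each `x ∉ M`. If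
two orthogonal idempotents lie outside `M`, then `e` is congruent modulo `M` to an idempotent
`f ≤ e` that factors through both of them, so that `f ⊕ f ≼ f` and `f ∈ K(f) ⊆ K(e) ⊆ M`, which is
absurd. Otherwise every idempotent outside `M` is a left identity modulo `M`, and `R / M` is a
division ring, contrary to pure infiniteness.
-/

section DiagFactors

variable {R S : Type*} [NonUnitalRing R] [NonUnitalRing S] {a b c : R}

theorem pairSub_iff : PairSub a b c ↔ ∃ α₁ α₂ β₁ β₂ : R,
    α₁ * c * β₁ = a ∧ α₁ * c * β₂ = 0 ∧ α₂ * c * β₁ = 0 ∧ α₂ * c * β₂ = b := by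
  constructor
  · rintro ⟨α, β, h⟩
    have entry (i j : Fin 2) : α i 0 * c * β 0 j = !![a, 0; 0, b] i j := by
      rw [h]
      simp [Matrix.mul_apply]
    exact ⟨α 0 0, α 1 0, β 0 0, β 0 1, entry 0 0, entry 0 1, entry 1 0, entry 1 1⟩
  · rintro ⟨α₁, α₂, β₁, β₂, h₁₁, h₁₂, h₂₁, h₂₂⟩
    refine ⟨!![α₁; α₂], !![β₁, β₂], ?_⟩
    ext i j
    fin_cases i <;> fin_cases j <;> simp [Matrix.mul_apply, h₁₁, h₁₂, h₂₁, h₂₂]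

/-- `diag(a, b)` is the product of a column and a row over `R`. For idempotents this is
`a ⊕ b ≼ u` for some `u : R`; omitting the middle factor avoids having to choose a unit. -/
def DiagFactors (a b : R) : Prop :=
  ∃ α₁ α₂ β₁ β₂ : R, α₁ * β₁ = a ∧ α₁ * β₂ = 0 ∧ α₂ * β₁ = 0 ∧ α₂ * β₂ = b

theorem PairSub.diagFactors (h : PairSub a b c) : DiagFactors a b := by
  obtain ⟨α₁, α₂, β₁, β₂, h⟩ := pairSub_iff.1 h
  exact ⟨α₁ * c, α₂ * c, β₁, β₂, h⟩

theorem diagFactors_of_orthogonal {g₁ g₂ : R} (hg₁ : IsIdempotentElem g₁)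
    (hg₂ : IsIdempotentElem g₂) (h₁₂ : g₁ * g₂ = 0) (h₂₁ : g₂ * g₁ = 0) (u v w z : R) :
    DiagFactors (u * g₁ * v) (w * g₂ * z) := by
  have through (g h p q : R) : p * g * (h * q) = p * (g * h) * q := by simp only [mul_assoc]
  exact ⟨u * g₁, w * g₂, g₁ * v, g₂ * z, by rw [through, hg₁.eq], by simp [through, h₁₂],
    by simp [through, h₂₁], by rw [through, hg₂.eq]⟩

namespace DiagFactors

theorem mul_left (h : DiagFactors a b) (x y : R) : DiagFactors (x * a) (y * b) := by
  obtain ⟨α₁, α₂, β₁, β₂, h₁₁, h₁₂, h₂₁, h₂₂⟩ := h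
  exact ⟨x * α₁, y * α₂, β₁, β₂, by simp [mul_assoc, h₁₁], by simp [mul_assoc, h₁₂],
    by simp [mul_assoc, h₂₁], by simp [mul_assoc, h₂₂]⟩

theorem map (h : DiagFactors a b) (φ : R →ₙ+* S) : DiagFactors (φ a) (φ b) := by
  obtain ⟨α₁, α₂, β₁, β₂, rfl, h₁₂, h₂₁, rfl⟩ := h
  exact ⟨φ α₁, φ α₂, φ β₁, φ β₂, by simp, by simp [← map_mul, h₁₂], by simp [← map_mul, h₂₁],
    by simp⟩

theorem eq_zero_or_eq_zero [NoZeroDivisors R] (h : DiagFactors a b) : a = 0 ∨ b = 0 := by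
  obtain ⟨α₁, α₂, β₁, β₂, rfl, h₁₂, -, rfl⟩ := h
  exact (mul_eq_zero.1 h₁₂).imp (by simp [·]) (by simp [·])

end DiagFactors

end DiagFactors

section ElemSubAddClosed

variable {R : Type*} [NonUnitalRing R] {a b c x y : R}

/-- Each `{b | b ≼ a}` is closed under addition. This is condition (ii) of pure infiniteness in the
form in which it is used; see `isElemSubAddClosed_iff`. -/
def IsElemSubAddClosed (R : Type*) [NonUnitalRing R] : Prop :=
  ∀ ⦃a b c : R⦄, ElemSub b a → ElemSub c a → ElemSub (b + c) a

theorem isElemSubAddClosed_iff :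
    IsElemSubAddClosed R ↔ ∀ a b : R, MemRaR a b → ElemSub b a := by
  constructor
  · rintro h a _ ⟨n, x, y, rfl⟩
    exact Finset.sum_induction _ (ElemSub · a) (fun _ _ => @h a _ _) ⟨0, 0, by simp⟩
      fun i _ => ⟨x i, y i, rfl⟩
  · rintro h a _ _ ⟨p, q, rfl⟩ ⟨r, s, rfl⟩
    exact h a _ ⟨2, ![p, r], ![q, s], by simp [Fin.sum_univ_two]⟩

theorem PairSub.elemSub_add (h : PairSub a b c) (hx : ElemSub x a) (hy : ElemSub y b) :
    ElemSub (x + y) c := by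
  obtain ⟨α₁, α₂, β₁, β₂, h₁₁, h₁₂, h₂₁, h₂₂⟩ := pairSub_iff.1 h
  obtain ⟨p, q, rfl⟩ := hx
  obtain ⟨r, s, rfl⟩ := hy
  refine ⟨p * α₁ + r * α₂, β₁ * q + β₂ * s, ?_⟩
  calc p * a * q + r * b * s
      = p * (α₁ * c * β₁) * q + r * (α₂ * c * β₁) * q
        + (p * (α₁ * c * β₂) * s + r * (α₂ * c * β₂) * s) := by simp [h₁₁, h₁₂, h₂₁, h₂₂]
    _ = (p * α₁ + r * α₂) * c * (β₁ * q + β₂ * s) := by simp only [add_mul, mul_add, mul_assoc]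

theorem IsElemSubAddClosed.pairSub_of_diagFactors (h : IsElemSubAddClosed R) {e₁ e₂ f₁ f₂ : R}
    (he : DiagFactors e₁ e₂) (hf : DiagFactors f₁ f₂) :
    PairSub (e₁ * a * f₁) (e₂ * a * f₂) a := by
  obtain ⟨α₁, α₂, β₁, β₂, he₁₁, he₁₂, he₂₁, he₂₂⟩ := he
  obtain ⟨γ₁, γ₂, δ₁, δ₂, hf₁₁, hf₁₂, hf₂₁, hf₂₂⟩ := hf
  -- The corners `β₁ a γ₁` and `β₂ a γ₂` are put together into one element `x a y`.
  obtain ⟨x, y, hxy⟩ := h (a := a) ⟨β₁, γ₁, rfl⟩ ⟨β₂, γ₂, rfl⟩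
  have expand (p q : R) :
      p * x * a * (y * q) = p * β₁ * a * (γ₁ * q) + p * β₂ * a * (γ₂ * q) := by
    calc p * x * a * (y * q) = p * (x * a * y) * q := by simp only [mul_assoc]
      _ = _ := by rw [← hxy]; simp only [mul_add, add_mul, mul_assoc]
  refine pairSub_iff.2 ⟨α₁ * x, α₂ * x, y * δ₁, y * δ₂, ?_, ?_, ?_, ?_⟩ <;>
    simp [expand, he₁₁, he₁₂, he₂₁, he₂₂, hf₁₁, hf₁₂, hf₂₁, hf₂₂]

end ElemSubAddClosed

section ProperlyPurelyInfinite

variable {R S : Type*} [NonUnitalRing R] [NonUnitalRing S]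

theorem IsDivisionRingPred.noZeroDivisors (h : IsDivisionRingPred S) : NoZeroDivisors S := by
  obtain ⟨u, -, hu, hinv⟩ := h
  refine ⟨fun {a b} hab => or_iff_not_imp_left.2 fun ha => ?_⟩
  obtain ⟨y, -, hy⟩ := hinv a ha
  calc b = y * (a * b) := by rw [← mul_assoc, hy, (hu b).1]
    _ = 0 := by rw [hab, mul_zero]

theorem IsProperlyPurelyInfiniteRing.not_isDivisionRingPred (h : IsProperlyPurelyInfiniteRing R)
    {φ : R →ₙ+* S} (hφ : Function.Surjective φ) : ¬ IsDivisionRingPred S := by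
  intro hS
  have := hS.noZeroDivisors
  obtain ⟨u, hu, -⟩ := hS
  obtain ⟨a, rfl⟩ := hφ u
  have ha : a ≠ 0 := by
    rintro rfl
    exact hu (map_zero φ)
  exact hu (or_self_iff.1 ((h a ha).2.diagFactors.map φ).eq_zero_or_eq_zero)

theorem IsProperlyPurelyInfiniteRing.isElemSubAddClosed (h : IsProperlyPurelyInfiniteRing R) :
    IsElemSubAddClosed R := by
  intro a b c hb hc
  by_cases ha : a = 0
  · obtain ⟨_, _, rfl⟩ := hb
    obtain ⟨_, _, rfl⟩ := hc
    exact ⟨0, 0, by simp [ha]⟩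
  · exact (h a ha).2.elemSub_add hb hc

/-- The projection `R → R / I` as a nonunital ring homomorphism; `RingCon.mk'` requires a unit. -/
def quotientHom (I : TwoSidedIdeal R) : R →ₙ+* I.ringCon.Quotient where
  toFun x := x
  map_mul' _ _ := rfl
  map_zero' := rfl
  map_add' _ _ := rfl

theorem quotientHom_surjective (I : TwoSidedIdeal R) : Function.Surjective (quotientHom I) :=
  Quotient.exists_rep

theorem quotientHom_eq_zero_iff {I : TwoSidedIdeal R} {x : R} : quotientHom I x = 0 ↔ x ∈ I :=
  RingCon.eq I.ringCon

theorem IsProperlyPurelyInfiniteRing.isPurelyInfiniteRing (h : IsProperlyPurelyInfiniteRing R) :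
    IsPurelyInfiniteRing R :=
  ⟨fun I => h.not_isDivisionRingPred (quotientHom_surjective I),
    isElemSubAddClosed_iff.1 h.isElemSubAddClosed⟩

end ProperlyPurelyInfinite

section Ideals

variable {R : Type*} [NonUnitalRing R] {a e f x y : R}

theorem mem_kSet_add (hx : x ∈ KSet a) (hy : y ∈ KSet a) : x + y ∈ KSet a := by
  obtain ⟨α₁, α₂, β₁, β₂, h₁₁, h₁₂, h₂₁, h₂₂⟩ := pairSub_iff.1 hx
  obtain ⟨γ₁, γ₂, δ₁, δ₂, k₁₁, k₁₂, k₂₁, k₂₂⟩ := pairSub_iff.1 hy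
  simp only [mul_assoc] at h₁₁ h₁₂ h₂₁ h₂₂
  -- Compose `a ⊕ x ⊕ y ≼ a ⊕ y ≼ a` and add the last two rows and columns.
  have k₁₁' (z : R) : γ₁ * (a * (δ₁ * z)) = a * z := by simp only [← mul_assoc, k₁₁]
  have k₂₁' (z : R) : γ₂ * (a * (δ₁ * z)) = 0 := by simp only [← mul_assoc, k₂₁, zero_mul]
  simp only [mul_assoc] at k₁₂ k₂₂
  refine pairSub_iff.2 ⟨α₁ * γ₁, α₂ * γ₁ + γ₂, δ₁ * β₁, δ₁ * β₂ + δ₂, ?_, ?_, ?_, ?_⟩ <;>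
    simp [add_mul, mul_add, mul_assoc, h₁₁, h₁₂, h₂₁, h₂₂, k₁₁', k₂₁', k₁₂, k₂₂]

theorem mem_kSet_mul_left (hx : x ∈ KSet a) (y : R) : y * x ∈ KSet a := by
  obtain ⟨α₁, α₂, β₁, β₂, h₁₁, h₁₂, h₂₁, h₂₂⟩ := pairSub_iff.1 hx
  simp only [mul_assoc] at h₂₁ h₂₂
  exact pairSub_iff.2 ⟨α₁, y * α₂, β₁, β₂, h₁₁, h₁₂, by simp [mul_assoc, h₂₁],
    by simp [mul_assoc, h₂₂]⟩

theorem mem_kSet_mul_right (hx : x ∈ KSet a) (y : R) : x * y ∈ KSet a := by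
  obtain ⟨α₁, α₂, β₁, β₂, h₁₁, h₁₂, h₂₁, h₂₂⟩ := pairSub_iff.1 hx
  exact pairSub_iff.2 ⟨α₁, α₂, β₁, β₂ * y, h₁₁, by simp [← mul_assoc, h₁₂], h₂₁,
    by simp [← mul_assoc, h₂₂]⟩

theorem mem_kSet_neg (hx : x ∈ KSet a) : -x ∈ KSet a := by
  obtain ⟨α₁, α₂, β₁, β₂, h₁₁, h₁₂, h₂₁, h₂₂⟩ := pairSub_iff.1 hx
  exact pairSub_iff.2 ⟨α₁, -α₂, β₁, β₂, h₁₁, h₁₂, by simp [h₂₁], by simp [h₂₂]⟩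

theorem zero_mem_kSet (ha : ElemSub a a) : 0 ∈ KSet a := by
  obtain ⟨p, q, h⟩ := ha
  exact pairSub_iff.2 ⟨p, 0, q, 0, h.symm, by simp, by simp, by simp⟩

/-- `K(a)` as a two-sided ideal. The condition `a ≼ a` is what puts `0` into it. -/
def kIdeal (ha : ElemSub a a) : TwoSidedIdeal R :=
  .mk' (KSet a) (zero_mem_kSet ha) mem_kSet_add mem_kSet_neg
    (fun {y _} hx => mem_kSet_mul_left hx y) (fun {_ y} hx => mem_kSet_mul_right hx y)

theorem mem_kIdeal {ha : ElemSub a a} : x ∈ kIdeal ha ↔ x ∈ KSet a :=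
  TwoSidedIdeal.mem_mk' ..

theorem kSet_subset_kSet_of_idempotent (he : IsIdempotentElem e) (hf : IsIdempotentElem f)
    (hef : e * f = f) (hfe : f * e = f) : KSet f ⊆ KSet e := by
  intro x hx
  obtain ⟨α₁, α₂, β₁, β₂, h₁₁, h₁₂, h₂₁, h₂₂⟩ := pairSub_iff.1 hx
  -- `e ⊕ x` is `(e - f) ⊕ (f ⊕ x)`, and `(e - f) ⊕ f` is `e`.
  have corner (p q : R) : p * f * e * (f * q) = p * f * q := by
    rw [mul_assoc p, hfe, ← mul_assoc, mul_assoc p, hf.eq]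
  have left (q : R) : (e - f) * e * (f * q) = 0 := by
    rw [sub_mul, he.eq, hfe, ← mul_assoc, sub_mul, hef, hf.eq, sub_self, zero_mul]
  have right (p : R) : p * f * e * (e - f) = 0 := by
    rw [mul_assoc p, hfe, mul_assoc, mul_sub, hfe, hf.eq, sub_self, mul_zero]
  have diag : (e - f) * e * (e - f) = e - f := by
    rw [sub_mul, he.eq, hfe, mul_sub, sub_mul, sub_mul, he.eq, hfe, hef, hf.eq, sub_self, sub_zero]
  refine pairSub_iff.2 ⟨(e - f) + f * α₁ * f, α₂ * f, (e - f) + f * (β₁ * f), f * β₂,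
    ?_, ?_, ?_, ?_⟩
  · simp only [add_mul, mul_add, diag, left, right, corner, zero_add, add_zero]
    rw [← mul_assoc, mul_assoc f, mul_assoc f, h₁₁, hf.eq, hf.eq, sub_add_cancel]
  · rw [add_mul, add_mul, left, corner, zero_add, mul_assoc f, mul_assoc f, h₁₂, mul_zero]
  · rw [mul_add, right, corner, zero_add, ← mul_assoc, h₂₁, zero_mul]
  · rw [corner, h₂₂]

/-- The ideal `{b | b ≼ a} = RaR`. -/
def elemSubIdeal (h : IsElemSubAddClosed R) (a : R) : TwoSidedIdeal R :=
  .mk' {b | ElemSub b a} ⟨0, 0, by simp⟩ (fun hx hy => h hx hy)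
    (by rintro _ ⟨p, q, rfl⟩; exact ⟨-p, q, by simp⟩)
    (by rintro x _ ⟨p, q, rfl⟩; exact ⟨x * p, q, by simp only [mul_assoc]⟩)
    (by rintro _ y ⟨p, q, rfl⟩; exact ⟨p, q * y, by simp only [mul_assoc]⟩)

theorem mem_elemSubIdeal {h : IsElemSubAddClosed R} : x ∈ elemSubIdeal h a ↔ ElemSub x a :=
  TwoSidedIdeal.mem_mk' ..

theorem IsSUnitalRing.elemSub_self (hs : IsSUnitalRing R) (a : R) : ElemSub a a := by
  obtain ⟨⟨u, hu⟩, v, hv⟩ := hs a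
  exact ⟨u, v, by rw [hu, hv]⟩

end Ideals

section Maximal

theorem exists_twoSidedIdeal_mem_iff_of_isChain {R : Type*} [NonUnitalNonAssocRing R]
    {c : Set (TwoSidedIdeal R)} (hc : IsChain (· ≤ ·) c) (hne : c.Nonempty) :
    ∃ U : TwoSidedIdeal R, ∀ x, x ∈ U ↔ ∃ I ∈ c, x ∈ I := by
  refine ⟨.mk' {x | ∃ I ∈ c, x ∈ I} ?_ ?_ ?_ ?_ ?_, fun x => TwoSidedIdeal.mem_mk' ..⟩
  · exact hne.imp fun I hI => ⟨hI, I.zero_mem⟩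
  · rintro x y ⟨I, hI, hx⟩ ⟨J, hJ, hy⟩
    rcases hc.total hI hJ with hIJ | hJI
    · exact ⟨J, hJ, J.add_mem (hIJ hx) hy⟩
    · exact ⟨I, hI, I.add_mem hx (hJI hy)⟩
  · rintro x ⟨I, hI, hx⟩
    exact ⟨I, hI, I.neg_mem hx⟩
  · rintro x y ⟨I, hI, hy⟩
    exact ⟨I, hI, I.mul_mem_left x y hy⟩
  · rintro x y ⟨I, hI, hx⟩
    exact ⟨I, hI, I.mul_mem_right x y hx⟩

theorem exists_le_maximal_notMem {R : Type*} [NonUnitalNonAssocRing R] {I : TwoSidedIdeal R}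
    {a : R} (ha : a ∉ I) : ∃ M : TwoSidedIdeal R, I ≤ M ∧ Maximal (a ∉ ·) M := by
  refine zorn_le_nonempty₀ {J : TwoSidedIdeal R | a ∉ J} (fun c hc hchain J hJ => ?_) I ha
  obtain ⟨U, hU⟩ := exists_twoSidedIdeal_mem_iff_of_isChain hchain ⟨J, hJ⟩
  refine ⟨U, fun haU => ?_, fun K hK x hx => (hU x).2 ⟨K, hK, hx⟩⟩
  obtain ⟨K, hK, haK⟩ := (hU a).1 haU
  exact hc hK haK

variable {R : Type*} [NonUnitalRing R] {e x : R}

theorem elemSub_quotientHom_of_maximal (hs : IsSUnitalRing R) (h : IsElemSubAddClosed R)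
    {M : TwoSidedIdeal R} (hM : Maximal (e ∉ ·) M) (hx : quotientHom M x ≠ 0) :
    ElemSub (quotientHom M e) (quotientHom M x) := by
  have he : e ∈ M ⊔ elemSubIdeal h x := by
    by_contra he
    have hle : elemSubIdeal h x ≤ M := le_sup_right.trans (hM.le_of_ge he le_sup_left)
    exact hx (quotientHom_eq_zero_iff.2 (hle (mem_elemSubIdeal.2 (hs.elemSub_self x))))
  obtain ⟨m, hm, z, hz, rfl⟩ := TwoSidedIdeal.mem_sup.1 he
  obtain ⟨p, q, rfl⟩ := mem_elemSubIdeal.1 hz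
  exact ⟨quotientHom M p, quotientHom M q, by simp [quotientHom_eq_zero_iff.2 hm]⟩

end Maximal

section Exchange

variable {R S : Type*} [NonUnitalRing R] [NonUnitalRing S] {φ : R →ₙ+* S}

theorem IsExchangeRing.exists_idempotent_right_unit (hex : IsExchangeRing R)
    (hs : IsSUnitalRing R) (x : R) : ∃ e : R, IsIdempotentElem e ∧ x * e = x := by
  obtain ⟨-, v, hv⟩ := hs x
  obtain ⟨e, -, s, he, -, hes⟩ := hex v
  refine ⟨e, he, ?_⟩
  calc x * e = x * v + x * s - x * v * s := by rw [hes, mul_sub, mul_add, mul_assoc]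
    _ = x := by rw [hv, add_sub_cancel_right]

theorem IsExchangeRing.exists_idempotent_lift (hex : IsExchangeRing R) {p : R}
    (hp : IsIdempotentElem (φ p)) :
    ∃ r, IsIdempotentElem (p * r) ∧ φ p * φ (p * r) = φ p := by
  obtain ⟨e, r, s, he, rfl, hes⟩ := hex p
  refine ⟨r, he, ?_⟩
  calc φ p * φ (p * r) = φ p * φ p + φ p * φ s - φ p * φ p * φ s := by
        rw [hes]; simp only [map_sub, map_add, map_mul, mul_sub, mul_add, mul_assoc]
    _ = φ p := by rw [hp.eq, add_sub_cancel_right]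

theorem IsExchangeRing.exists_mul_idempotent_map_ne_zero (hex : IsExchangeRing R)
    (hφ : Function.Surjective φ) {e x : R} (he : IsIdempotentElem e) (he0 : φ e ≠ 0)
    (hx : ElemSub (φ e) (φ x)) : ∃ t, IsIdempotentElem (x * t) ∧ φ (x * t) ≠ 0 := by
  obtain ⟨p, q, h⟩ := hx
  obtain ⟨a, rfl⟩ := hφ p
  obtain ⟨b, rfl⟩ := hφ q
  have hee : φ e * φ e = φ e := (he.map φ).eq
  -- Cyclically permuting the factors of `e ≡ e a x b` gives an idempotent in `xR` modulo `ker φ`.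
  have hidem : IsIdempotentElem (φ (x * (b * (e * a)))) := by
    calc φ (x * (b * (e * a))) * φ (x * (b * (e * a)))
        = φ x * φ b * φ e * (φ a * φ x * φ b) * φ e * φ a := by simp only [map_mul, mul_assoc]
      _ = φ x * φ b * (φ e * φ e * φ e) * φ a := by rw [← h]; simp only [mul_assoc]
      _ = φ (x * (b * (e * a))) := by simp only [hee, map_mul, mul_assoc]
  obtain ⟨r, hr, hpr⟩ := hex.exists_idempotent_lift hidem
  refine ⟨b * (e * a) * r, by rwa [← mul_assoc], fun h0 => he0 ?_⟩
  rw [← mul_assoc] at h0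
  have hp0 : φ (x * (b * (e * a))) = 0 := by rw [← hpr, h0, mul_zero]
  calc φ e = φ e * φ e * φ e := by rw [hee, hee]
    _ = φ a * φ x * φ b * φ e * (φ a * φ x * φ b) := by rw [← h]
    _ = φ a * φ (x * (b * (e * a))) * (φ x * φ b) := by simp only [map_mul, mul_assoc]
    _ = 0 := by rw [hp0, mul_zero, zero_mul]

theorem IsExchangeRing.exists_idempotent_lift_le (hex : IsExchangeRing R) {e p : R}
    (he : IsIdempotentElem e) (hep : e * p = p) (hp : φ p = φ e) :
    ∃ r, IsIdempotentElem (p * r * e) ∧ e * (p * r * e) = p * r * e ∧ φ (p * r * e) = φ e := by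
  obtain ⟨r, hr, hpr⟩ := hex.exists_idempotent_lift (hp ▸ he.map φ : IsIdempotentElem (φ p))
  have her : e * (p * r) = p * r := by rw [← mul_assoc, hep]
  have hφr : φ (p * r) = φ e := by
    calc φ (p * r) = φ p * φ (p * r) := by rw [hp, ← map_mul, her]
      _ = φ e := by rw [hpr, hp]
  refine ⟨r, ?_, by rw [← mul_assoc, her], by rw [map_mul, hφr, (he.map φ).eq]⟩
  calc p * r * e * (p * r * e) = p * r * (e * (p * r)) * e := by simp only [mul_assoc]
    _ = p * r * e := by rw [her, hr.eq]

theorem IsExchangeRing.exists_mem_kSet_map_eq (hex : IsExchangeRing R)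
    (h : IsElemSubAddClosed R) (hφ : Function.Surjective φ) {e g₁ g₂ : R}
    (he : IsIdempotentElem e) (hg₁ : IsIdempotentElem g₁) (hg₂ : IsIdempotentElem g₂)
    (h₁₂ : g₁ * g₂ = 0) (h₂₁ : g₂ * g₁ = 0)
    (hsub₁ : ElemSub (φ e) (φ g₁)) (hsub₂ : ElemSub (φ e) (φ g₂)) :
    ∃ f ∈ KSet e, φ f = φ e := by
  obtain ⟨p, q, hpq⟩ := hsub₁
  obtain ⟨a, rfl⟩ := hφ p
  obtain ⟨b, rfl⟩ := hφ q
  obtain ⟨p, q, hpq'⟩ := hsub₂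
  obtain ⟨c, rfl⟩ := hφ p
  obtain ⟨d, rfl⟩ := hφ q
  -- The lift `f` of `e` has both `g₁` and `g₂` as factors.
  obtain ⟨r, hf, hef, hfe⟩ := hex.exists_idempotent_lift_le (φ := φ)
    (p := e * (a * g₁ * b) * (c * g₂ * d)) he (by simp only [← mul_assoc, he.eq])
    (by simp only [map_mul, ← hpq, ← hpq', (he.map φ).eq])
  set f := e * (a * g₁ * b) * (c * g₂ * d) * r * e with hfdef
  have hD : DiagFactors f f := by
    convert diagFactors_of_orthogonal hg₁ hg₂ h₁₂ h₂₁
      (e * a) (b * (c * g₂ * d) * r * e) (e * (a * g₁ * b) * c) (d * r * e) using 1 <;>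
    simp only [hfdef, mul_assoc]
  have hff : f ∈ KSet f := by
    have := h.pairSub_of_diagFactors (a := f) hD hD
    rwa [hf.eq, hf.eq] at this
  have hfe' : f * e = f := by rw [hfdef, mul_assoc, he.eq]
  exact ⟨f, kSet_subset_kSet_of_idempotent he hf hef hfe' hff, hfe⟩

end Exchange

section DivisionRing

variable {R S : Type*} [NonUnitalRing R] [NonUnitalRing S] {φ : R →ₙ+* S}

theorem isDivisionRingPred_of_left_unit_of_right_inverse {u : S} (hu : u ≠ 0)
    (hone : ∀ x, u * x = x) (hinv : ∀ x, x ≠ 0 → ∃ y, x * y = u) : IsDivisionRingPred S := by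
  have mul_one (x : S) : x * u = x := by
    by_contra hx
    obtain ⟨y, hy⟩ := hinv (x - x * u) (sub_ne_zero.2 (Ne.symm hx))
    exact hu (by rw [← hy, sub_mul, mul_assoc, hone, sub_self])
  refine ⟨u, hu, fun x => ⟨hone x, mul_one x⟩, fun x hx => ?_⟩
  obtain ⟨y, hxy⟩ := hinv x hx
  have hy : y ≠ 0 := by
    rintro rfl
    exact hu (by rw [← hxy, mul_zero])
  obtain ⟨z, hyz⟩ := hinv y hy
  have hxz : x = z := by rw [← mul_one x, ← hyz, ← mul_assoc, hxy, hone]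
  exact ⟨y, hxy, by rw [hxz, hyz]⟩

theorem map_mul_eq_of_no_orthogonal_idempotents {h : R} (hh : IsIdempotentElem h) (hh0 : φ h ≠ 0)
    (hidem : ∀ x, φ x ≠ 0 → ∃ t, IsIdempotentElem (x * t) ∧ φ (x * t) ≠ 0)
    (horth : ∀ f g, IsIdempotentElem f → IsIdempotentElem g → f * g = 0 → g * f = 0 →
      φ f = 0 ∨ φ g = 0) (r : R) : φ (h * r) = φ r := by
  by_contra hr
  obtain ⟨g, hg, hg0, hhg⟩ : ∃ g, IsIdempotentElem g ∧ φ g ≠ 0 ∧ h * g = 0 := by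
    obtain ⟨t, ht, ht0⟩ := hidem (r - h * r) (by rwa [map_sub, sub_ne_zero, ne_comm])
    exact ⟨_, ht, ht0, by rw [← mul_assoc, mul_sub, ← mul_assoc, hh.eq, sub_self, zero_mul]⟩
  -- `g - g h` is an idempotent orthogonal to `h`.
  have hhg' : h * (g - g * h) = 0 := by rw [mul_sub, ← mul_assoc, hhg, zero_mul, sub_zero]
  have hgh' : (g - g * h) * h = 0 := by rw [sub_mul, mul_assoc, hh.eq, sub_self]
  have hg' : IsIdempotentElem (g - g * h) := by
    change (g - g * h) * (g - g * h) = g - g * h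
    rw [sub_mul, mul_assoc, hhg', mul_zero, sub_zero, mul_sub, ← mul_assoc, hg.eq]
  have hdiff : φ (g - g * h) = 0 := (horth h (g - g * h) hh hg' hhg' hgh').resolve_left hh0
  apply hg0
  calc φ g = φ (g * g) := by rw [hg.eq]
    _ = φ (g - g * h) * φ g + φ (g * (h * g)) := by simp only [map_mul, map_sub]; noncomm_ring
    _ = 0 := by rw [hdiff, hhg, zero_mul, mul_zero, map_zero, add_zero]

theorem isDivisionRingPred_of_no_orthogonal_idempotents (hφ : Function.Surjective φ) {e : R}
    (he : IsIdempotentElem e) (he0 : φ e ≠ 0)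
    (hidem : ∀ x, φ x ≠ 0 → ∃ t, IsIdempotentElem (x * t) ∧ φ (x * t) ≠ 0)
    (horth : ∀ f g, IsIdempotentElem f → IsIdempotentElem g → f * g = 0 → g * f = 0 →
      φ f = 0 ∨ φ g = 0) : IsDivisionRingPred S := by
  refine isDivisionRingPred_of_left_unit_of_right_inverse he0 (fun y => ?_) fun y hy => ?_
  · obtain ⟨r, rfl⟩ := hφ y
    rw [← map_mul, map_mul_eq_of_no_orthogonal_idempotents he he0 hidem horth]
  · obtain ⟨x, rfl⟩ := hφ y
    obtain ⟨t, ht, ht0⟩ := hidem x hy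
    refine ⟨φ (t * e), ?_⟩
    rw [← map_mul, ← mul_assoc, map_mul_eq_of_no_orthogonal_idempotents ht ht0 hidem horth]

end DivisionRing

section PurelyInfinite

variable {R : Type*} [NonUnitalRing R]

theorem IsPurelyInfiniteRing.self_mem_kSet (hpi : IsPurelyInfiniteRing R) (hs : IsSUnitalRing R)
    (hex : IsExchangeRing R) {e : R} (he : IsIdempotentElem e) : e ∈ KSet e := by
  have hadd : IsElemSubAddClosed R := isElemSubAddClosed_iff.2 hpi.2
  by_contra heK
  obtain ⟨M, hKM, hM⟩ := exists_le_maximal_notMem (I := kIdeal (hs.elemSub_self e))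
    (mt mem_kIdeal.1 heK)
  have hφ := quotientHom_surjective M
  have he0 : quotientHom M e ≠ 0 := mt quotientHom_eq_zero_iff.1 hM.prop
  have hsub {x : R} (hx : quotientHom M x ≠ 0) : ElemSub (quotientHom M e) (quotientHom M x) :=
    elemSub_quotientHom_of_maximal hs hadd hM hx
  refine hpi.1 M (isDivisionRingPred_of_no_orthogonal_idempotents hφ he he0
    (fun x hx => hex.exists_mul_idempotent_map_ne_zero hφ he he0 (hsub hx))
    fun g₁ g₂ hg₁ hg₂ h₁₂ h₂₁ => ?_)
  by_contra! hne
  obtain ⟨f, hfK, hfe⟩ := hex.exists_mem_kSet_map_eq hadd hφ he hg₁ hg₂ h₁₂ h₂₁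
    (hsub hne.1) (hsub hne.2)
  exact he0 (hfe ▸ quotientHom_eq_zero_iff.2 (hKM (mem_kIdeal.2 hfK)))

theorem IsPurelyInfiniteRing.diagFactors_self (hpi : IsPurelyInfiniteRing R)
    (hs : IsSUnitalRing R) (hex : IsExchangeRing R) (x : R) : DiagFactors x x := by
  obtain ⟨e, he, hxe⟩ := hex.exists_idempotent_right_unit hs x
  simpa only [hxe] using (hpi.self_mem_kSet hs hex he : PairSub e e e).diagFactors.mul_left x x

theorem IsPurelyInfiniteRing.isProperlyPurelyInfiniteRing (hpi : IsPurelyInfiniteRing R)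
    (hs : IsSUnitalRing R) (hex : IsExchangeRing R) : IsProperlyPurelyInfiniteRing R := by
  intro a ha
  obtain ⟨⟨u, hu⟩, v, hv⟩ := hs a
  have hpair : PairSub (u * a * v) (u * a * v) a :=
    (isElemSubAddClosed_iff.2 hpi.2).pairSub_of_diagFactors
      (hpi.diagFactors_self hs hex u) (hpi.diagFactors_self hs hex v)
  rw [hu, hv] at hpair
  exact ⟨ha, hpair⟩

end PurelyInfinite

/-- Corollary 5.10 (exchangepinfstrong): an s-unital exchange ring is purely infinite if and
only if it is properly purely infinite. -/
theorem purelyInfinite_iff_properlyPurelyInfinite_of_sunital_exchange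
    {R : Type*} [NonUnitalRing R] (hs : IsSUnitalRing R) (hex : IsExchangeRing R) :
    IsPurelyInfiniteRing R ↔ IsProperlyPurelyInfiniteRing R :=
  ⟨fun h => h.isProperlyPurelyInfiniteRing hs hex,
    IsProperlyPurelyInfiniteRing.isPurelyInfiniteRing⟩
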